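/- Let p be an odd prime, M a cyclic group of order p^n, and H a nontrivial subgroup of (Z/p^n)^× acting on M via the natural identification Aut(M) ≅ (Z/p^n)^×. Then H^1(H, M) = 0 and H^2(H, M) = 0. -/

import Mathlib

open groupCohomology

/-!
`H` is cyclic, generated by some `g`, so `Hⁱ(H, M)` is the homology of the periodic complex whose
differentials are alternately multiplication by `g - 1` and by the norm
`N = 1 + g + ⋯ + g^(ord g - 1)` on `M = ℤ/pⁿ`. This complex is exact in positive degrees as soon as
`g - 1` and `N` are, up to units, `pᵃ` and `pᵇ` with `a + b = n`.

Let `pᵃ` be the exact power of `p` in `g - 1`. If `a = 0` then `g - 1` is a unit and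
`N (g - 1) = g^(ord g) - 1 = 0` forces `N = 0 = pⁿ`. If `a > 0`, lifting the exponent shows that
`1 + g + ⋯ + gᵏ⁻¹` and `k` agree up to a unit for every `k`; hence `gᵏ = 1` iff `pⁿ ∣ pᵃ k`, so
`g` has order `pⁿ⁻ᵃ`, and taking `k = ord g` gives `b = n - a`.
-/

section PrimePowerModulus

variable {p : ℕ}

lemma emultiplicity_geom_sum (hp : p.Prime) (hodd : Odd p) {x : ℤ} (hx : (p : ℤ) ∣ x - 1)
    (k : ℕ) : emultiplicity (p : ℤ) (∑ i ∈ Finset.range k, x ^ i) = emultiplicity (p : ℤ) k := by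
  obtain rfl | hx1 := eq_or_ne x 1
  · simp
  have hp' : Prime (p : ℤ) := Nat.prime_iff_prime_int.mp hp
  have hpx : ¬ (p : ℤ) ∣ x := fun h ↦ hp'.not_dvd_one ((dvd_sub_right h).mp hx)
  have hfin : emultiplicity (p : ℤ) (x - 1) ≠ ⊤ :=
    finiteMultiplicity_iff_emultiplicity_ne_top.mp (.of_prime_left hp' (sub_ne_zero.mpr hx1))
  have lte := Int.emultiplicity_pow_sub_pow hp hodd hx hpx k
  rw [one_pow, ← geom_sum_mul, emultiplicity_mul hp', add_comm, ← Int.natCast_emultiplicity] at lte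
  exact ENat.add_right_injective_of_ne_top hfin lte

lemma isUnit_intCast_zmod_prime_pow_of_not_dvd (hp : p.Prime) (n : ℕ) {u : ℤ} (hu : ¬ (p : ℤ) ∣ u) :
    IsUnit (u : ZMod (p ^ n)) := by
  rw [ZMod.coe_int_isUnit_iff_isCoprime, Nat.cast_pow]
  exact ((Nat.prime_iff_prime_int.mp hp).coprime_iff_not_dvd.mpr hu).pow_left

lemma associated_intCast_zmod_of_emultiplicity_eq (hp : p.Prime) (n : ℕ) {x y : ℤ}
    (h : emultiplicity (p : ℤ) x = emultiplicity (p : ℤ) y) :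
    Associated (x : ZMod (p ^ n)) y := by
  have hp' : Prime (p : ℤ) := Nat.prime_iff_prime_int.mp hp
  have finite_iff (z : ℤ) : FiniteMultiplicity (p : ℤ) z ↔ z ≠ 0 :=
    ⟨fun hz ↦ hz.ne_zero, .of_prime_left hp'⟩
  have hxy : x = 0 ↔ y = 0 := by
    rw [← not_iff_not, ← ne_eq, ← ne_eq, ← finite_iff, ← finite_iff,
      finiteMultiplicity_iff_emultiplicity_ne_top, h, finiteMultiplicity_iff_emultiplicity_ne_top]
  obtain rfl | hx := eq_or_ne x 0
  · rw [hxy.mp rfl]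
  obtain ⟨u, hxu, hu⟩ := ((finite_iff x).mpr hx).exists_eq_pow_mul_and_not_dvd
  obtain ⟨v, hyv, hv⟩ := ((finite_iff y).mpr (hxy.not.mp hx)).exists_eq_pow_mul_and_not_dvd
  rw [hxu, hyv, multiplicity_eq_of_emultiplicity_eq h, Int.cast_mul, Int.cast_mul]
  exact (associated_mul_unit_left _ _ (isUnit_intCast_zmod_prime_pow_of_not_dvd hp n hu)).trans
    (associated_mul_unit_left _ _ (isUnit_intCast_zmod_prime_pow_of_not_dvd hp n hv)).symm

lemma associated_geom_sum_natCast (hp : p.Prime) (hodd : Odd p) {n : ℕ} {x : ZMod (p ^ n)}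
    (hx : (p : ZMod (p ^ n)) ∣ x - 1) (k : ℕ) :
    Associated (∑ i ∈ Finset.range k, x ^ i) (k : ZMod (p ^ n)) := by
  obtain ⟨c, hc⟩ := hx
  obtain ⟨C, rfl⟩ := ZMod.intCast_surjective c
  obtain rfl : x = ((p * C + 1 : ℤ) : ZMod (p ^ n)) := by
    push_cast
    exact sub_eq_iff_eq_add.mp hc
  have hval := emultiplicity_geom_sum hp hodd (x := p * C + 1) (by simp) k
  exact_mod_cast associated_intCast_zmod_of_emultiplicity_eq hp n hval

lemma orderOf_eq_of_associated_sub_one (hp : p.Prime) (hodd : Odd p) {a b : ℕ} (ha : a ≠ 0)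
    {x : ZMod (p ^ (a + b))} (hx : Associated (x - 1) (p ^ a)) : orderOf x = p ^ b := by
  have hpx : (p : ZMod (p ^ (a + b))) ∣ x - 1 := (dvd_pow_self _ ha).trans hx.symm.dvd
  refine Nat.dvd_right_iff_eq.mp fun k ↦ ?_
  rw [orderOf_dvd_iff_pow_eq_one]
  calc x ^ k = 1
    _ ↔ (∑ i ∈ Finset.range k, x ^ i) * (x - 1) = 0 := by rw [geom_sum_mul, sub_eq_zero]
    _ ↔ (k * p ^ a : ZMod (p ^ (a + b))) = 0 :=
      ((associated_geom_sum_natCast hp hodd hpx k).mul_mul hx).eq_zero_iff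
    _ ↔ p ^ (a + b) ∣ p ^ a * k := by
      rw [← ZMod.natCast_eq_zero_iff, mul_comm, Nat.cast_mul, Nat.cast_pow]
    _ ↔ p ^ b ∣ k := by rw [pow_add, Nat.mul_dvd_mul_iff_left (pow_pos hp.pos a)]

lemma exists_associated_sub_one_and_geom_sum (hp : p.Prime) (hodd : Odd p) {n : ℕ}
    (x : ZMod (p ^ n)) :
    ∃ a b, a + b = n ∧ Associated (x - 1) (p ^ a) ∧
      Associated (∑ i ∈ Finset.range (orderOf x), x ^ i) (p ^ b) := by
  obtain ⟨d, hd, u, hu, hxu⟩ := ZMod.eq_unit_mul_divisor (x - 1)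
  obtain ⟨a, han, rfl⟩ := (Nat.dvd_prime_pow hp).mp hd
  obtain ⟨b, rfl⟩ := Nat.exists_eq_add_of_le han
  have hx : Associated (x - 1) (p ^ a) := by
    rw [hxu, Nat.cast_pow]
    exact associated_unit_mul_left _ u hu
  refine ⟨a, b, rfl, hx, ?_⟩
  obtain rfl | ha := eq_or_ne a 0
  · have hunit : IsUnit (x - 1) := by simpa using hx
    have hsum : (∑ i ∈ Finset.range (orderOf x), x ^ i) * (x - 1) = 0 := by
      rw [geom_sum_mul, pow_orderOf_eq_one, sub_self]
    have hp0 : (p : ZMod (p ^ (0 + b))) ^ b = 0 := by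
      exact_mod_cast (ZMod.natCast_eq_zero_iff _ _).mpr (by simp)
    rw [hunit.mul_left_eq_zero.mp hsum, hp0]
  · have hpx : (p : ZMod (p ^ (a + b))) ∣ x - 1 := (dvd_pow_self _ ha).trans hx.symm.dvd
    have hsum := associated_geom_sum_natCast hp hodd hpx (orderOf x)
    rw [orderOf_eq_of_associated_sub_one hp hodd ha hx] at hsum ⊢
    exact_mod_cast hsum

end PrimePowerModulus

lemma zmod_natCast_mul_eq_zero_iff_dvd {k l m : ℕ} (hl : l ≠ 0) (hm : k * l = m) (z : ZMod m) :
    (l : ZMod m) * z = 0 ↔ (k : ZMod m) ∣ z := by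
  subst hm
  constructor
  · obtain ⟨Z, rfl⟩ := ZMod.intCast_surjective z
    intro h
    have hdvd : ((k * l : ℕ) : ℤ) ∣ l * Z := by
      rw [← ZMod.intCast_zmod_eq_zero_iff_dvd]
      exact_mod_cast h
    rw [Nat.cast_mul, mul_comm (k : ℤ), mul_dvd_mul_iff_left (Nat.cast_ne_zero.mpr hl)] at hdvd
    exact_mod_cast Int.cast_dvd_cast (α := ZMod (k * l)) _ _ hdvd
  · rintro ⟨w, rfl⟩
    rw [← mul_assoc, mul_comm (l : ZMod (k * l)), ← Nat.cast_mul, ZMod.natCast_self, zero_mul]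

lemma zmod_exact_mul_of_associated {k l m : ℕ} (hl : l ≠ 0) (hm : k * l = m) {x y : ZMod m}
    (hx : Associated x k) (hy : Associated y l) : Function.Exact (x * ·) (y * ·) := fun z ↦
  calc y * z = 0
    _ ↔ (l : ZMod m) * z = 0 := (hy.mul_right z).eq_zero_iff
    _ ↔ (k : ZMod m) ∣ z := zmod_natCast_mul_eq_zero_iff_dvd hl hm z
    _ ↔ x ∣ z := hx.symm.dvd_iff_dvd_left
    _ ↔ z ∈ Set.range (x * ·) := exists_congr fun _ ↦ eq_comm

lemma representation_norm_eq_sum_range_pow {k G V : Type*} [CommSemiring k] [Group G] [Fintype G]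
    [AddCommMonoid V] [Module k V] (ρ : Representation k G V) {g : G}
    (hg : ∀ x, x ∈ Subgroup.zpowers g) : ρ.norm = ∑ i ∈ Finset.range (orderOf g), ρ g ^ i := by
  classical
  rw [Representation.norm, ← IsCyclic.image_range_orderOf hg, Finset.sum_image]
  · simp_rw [map_pow]
  · simpa using pow_injOn_Iio_orderOf

section CyclicGroupCohomology

open CategoryTheory

universe u

variable {k G : Type u} [CommRing k] [CommGroup G] [Fintype G] {A : Rep k G} {g : G}

lemma subsingleton_groupCohomology_of_odd (hg : ∀ x, x ∈ Subgroup.zpowers g)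
    (h : Function.Exact (A.ρ g - 1 : Module.End k A) A.ρ.norm) {i : ℕ} (hi : Odd i) :
    Subsingleton (groupCohomology A i) := by
  have hexact : (Rep.FiniteCyclicGroup.subCompNormHom A g).Exact :=
    (ShortComplex.ShortExact.moduleCat_exact_iff_function_exact _).mpr h
  exact ModuleCat.subsingleton_of_isZero <| .of_iso
    ((ShortComplex.exact_iff_isZero_homology _).mp hexact)
    (Rep.FiniteCyclicGroup.groupCohomologyIsoOdd A g hg i hi)

lemma subsingleton_groupCohomology_of_even (hg : ∀ x, x ∈ Subgroup.zpowers g)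
    (h : Function.Exact A.ρ.norm (A.ρ g - 1 : Module.End k A)) {i : ℕ} [NeZero i] (hi : Even i) :
    Subsingleton (groupCohomology A i) := by
  have hexact : (Rep.FiniteCyclicGroup.normHomCompSub A g).Exact :=
    (ShortComplex.ShortExact.moduleCat_exact_iff_function_exact _).mpr h
  exact ModuleCat.subsingleton_of_isZero <| .of_iso
    ((ShortComplex.exact_iff_isZero_homology _).mp hexact)
    (Rep.FiniteCyclicGroup.groupCohomologyIsoEven A g hg i hi)

end CyclicGroupCohomology

section UnitsAction

variable {R : Type*} [CommRing R] {H : Subgroup Rˣ} {g : H}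

lemma ofDistribMulAction_sub_one_apply (x : R) :
    (Representation.ofDistribMulAction ℤ H R g - 1) x = ((g : Rˣ) - 1 : R) * x := by
  rw [sub_mul, one_mul]
  rfl

lemma ofDistribMulAction_norm_apply [Fintype H] (hg : ∀ x, x ∈ Subgroup.zpowers g) (x : R) :
    (Representation.ofDistribMulAction ℤ H R).norm x =
      (∑ i ∈ Finset.range (orderOf ((g : Rˣ) : R)), ((g : Rˣ) : R) ^ i) * x := by
  rw [representation_norm_eq_sum_range_pow _ hg, orderOf_units, Subgroup.orderOf_coe,
    LinearMap.sum_apply, Finset.sum_mul]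
  refine Finset.sum_congr rfl fun i _ ↦ ?_
  rw [← map_pow]
  rfl

end UnitsAction

theorem stmt0_general (p : ℕ) (hp : p.Prime) (hodd : Odd p) (n : ℕ)
    (H : Subgroup (ZMod (p ^ n))ˣ) (i : ℕ) [NeZero i] :
    Subsingleton (groupCohomology (Rep.ofDistribMulAction ℤ H (ZMod (p ^ n))) i) := by
  have : NeZero (p ^ n) := ⟨pow_ne_zero n hp.ne_zero⟩
  obtain ⟨_⟩ := nonempty_fintype H
  have : IsCyclic (ZMod (p ^ n))ˣ :=
    ZMod.isCyclic_units_of_prime_pow p hp (hodd.ne_two_of_dvd_nat dvd_rfl) n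
  obtain ⟨g, hg⟩ := IsCyclic.exists_generator (α := H)
  obtain ⟨a, b, hab, hsub, hsum⟩ :=
    exists_associated_sub_one_and_geom_sum hp hodd ((g : (ZMod (p ^ n))ˣ) : ZMod (p ^ n))
  rw [← Nat.cast_pow] at hsub hsum
  set ρ := Representation.ofDistribMulAction ℤ H (ZMod (p ^ n))
  have hsub_apply : ⇑(ρ g - 1) = _ := funext ofDistribMulAction_sub_one_apply
  have hnorm_apply : ⇑ρ.norm = _ := funext (ofDistribMulAction_norm_apply hg)
  obtain hi | hi := Nat.even_or_odd i
  · have hexact : Function.Exact ρ.norm ⇑(ρ g - 1) := by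
      rw [hsub_apply, hnorm_apply]
      exact zmod_exact_mul_of_associated (pow_ne_zero a hp.ne_zero)
        (by rw [← pow_add, add_comm, hab]) hsum hsub
    exact subsingleton_groupCohomology_of_even hg hexact hi
  · have hexact : Function.Exact ⇑(ρ g - 1) ρ.norm := by
      rw [hsub_apply, hnorm_apply]
      exact zmod_exact_mul_of_associated (pow_ne_zero b hp.ne_zero)
        (by rw [← pow_add, hab]) hsub hsum
    exact subsingleton_groupCohomology_of_odd hg hexact hi

/-- For an odd prime `p`, if `M = ℤ/pⁿ` (a cyclic group of order `pⁿ`) and `H` is a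
nontrivial subgroup of `(ℤ/pⁿ)ˣ = Aut(M)` acting on `M` by multiplication, then
`H¹(H, M) = 0` and `H²(H, M) = 0`. -/
theorem stmt0 (p : ℕ) (hp : p.Prime) (hodd : Odd p) (n : ℕ) (hn : 0 < n)
    (H : Subgroup (ZMod (p ^ n))ˣ) (hH : H ≠ ⊥) :
    Subsingleton (groupCohomology.H1 (Rep.ofDistribMulAction ℤ H (ZMod (p ^ n)))) ∧
    Subsingleton (groupCohomology.H2 (Rep.ofDistribMulAction ℤ H (ZMod (p ^ n)))) :=
  ⟨stmt0_general p hp hodd n H 1, stmt0_general p hp hodd n H 2⟩
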